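/- arXiv:1510.08883 — 2 statements merged into one kernel-verified Lean document; each statement's English description precedes it below -/
import Mathlib

section
/- Let C be a linear (k,n,r,t) batch code over a finite field F with minimum distance d, where all symbols recovered in each step of the subcode-construction algorithm are copies of a single information symbol. Then d ≤ n − k − (t−1)(⌈k/(rt−t+1)⌉ − 1) + 1. -/
/-!
View the coordinates of `C` as linear functionals on `F^k`, and give a set `S` of positions the rank
of the functionals it indexes. If `S` has rank less than `k`, some nonzero message encodes to a word
vanishing on `S`, so `d + |S| ≤ n`. It therefore suffices to find a set of rank `k - 1` with at
least `k - 1 + (t - 1) (L - 1)` elements, where `L = ⌈k / (r t - t + 1)⌉`.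

Call `|S| - rank S` the excess of `S`. While the rank of `S` is less than `k`, some information
symbol `i` is not determined by `S`. Adjoin to `S` the union of `t` disjoint recovery sets for `i`.
The functional `x ↦ x i` lies in the span of each of them but not in the span of `S`, so every
recovery set after the first contributes at least one dependency (`finrank_step`): the excess grows
by at least `t - 1`, and the rank by at most `r t - t + 1`. Hence `L - 1` such steps are possible
while the rank stays below `k` (`exists_excess`), and adjoining independent positions one by one
brings the rank to `k - 1` without changing the excess (`exists_extend`).
-/

def IsRecoverySet {σ : Type*} {k n : ℕ}
    (C : (Fin k → σ) → (Fin n → σ)) (i : Fin k) (S : Finset (Fin n)) : Prop :=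
  ∀ x₁ x₂ : Fin k → σ, (∀ j ∈ S, C x₁ j = C x₂ j) → x₁ i = x₂ i

def IsBatchCode {σ : Type*} {k n : ℕ}
    (C : (Fin k → σ) → (Fin n → σ)) (r t : ℕ) : Prop :=
  ∀ f : Fin t → Fin k, ∃ S : Fin t → Finset (Fin n),
    (∀ a b : Fin t, a ≠ b → Disjoint (S a) (S b)) ∧
    (∀ a, (S a).card ≤ r) ∧
    (∀ a, IsRecoverySet C (f a) (S a))

/-- `⌈a / b⌉` for natural numbers. -/
def natCeilDiv (a b : ℕ) : ℕ := (a + b - 1) / b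

open Module

/-- The span of the vectors indexed by the finite set `S`. -/
def spanOn {F V ι : Type*} [Field F] [AddCommGroup V] [Module F V] (v : ι → V) (S : Finset ι) :
    Submodule F V :=
  Submodule.span F (v '' (S : Set ι))

/-- The coordinate functionals `x ↦ C x j` of a linear encoder. -/
def coordFun {F : Type*} [Field F] {k n : ℕ} (C : (Fin k → F) →ₗ[F] (Fin n → F)) (j : Fin n) :
    Dual F (Fin k → F) :=
  (LinearMap.proj j).comp C

section Span

variable {F V ι : Type*} [Field F] [AddCommGroup V] [Module F V] (v : ι → V)

lemma finrank_spanOn_le (S : Finset ι) : finrank F (spanOn (F := F) v S) ≤ S.card := by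
  classical
  have h := finrank_span_finset_le_card (R := F) (S.image v)
  rw [Finset.coe_image] at h
  exact h.trans Finset.card_image_le

variable [DecidableEq ι]

lemma spanOn_union (S T : Finset ι) :
    spanOn (F := F) v (S ∪ T) = spanOn v S ⊔ spanOn v T := by
  simp [spanOn, Set.image_union, Submodule.span_union]

variable [FiniteDimensional F V]

lemma finrank_spanOn_union_le (S T : Finset ι) :
    finrank F (spanOn (F := F) v (S ∪ T)) ≤ finrank F (spanOn (F := F) v S) + (T \ S).card := by
  rw [← Finset.union_sdiff_self_eq_union, spanOn_union]
  have h1 := Submodule.finrank_sup_add_finrank_inf_eq (spanOn (F := F) v S) (spanOn v (T \ S))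
  have h2 := finrank_spanOn_le (F := F) v (T \ S)
  omega

/-- If `e` lies outside the span of `S` but in the span of each `R a`, then, relative to the span of
`S` together with `e`, each `R a` raises the rank by at most `|R a \ S| - 1`. -/
lemma finrank_step {α : Type*} [DecidableEq α] (S : Finset ι) (R : α → Finset ι) {e : V}
    (he : e ∉ spanOn (F := F) v S) (hR : ∀ a, e ∈ spanOn (F := F) v (R a)) (A : Finset α) :
    finrank F (spanOn (F := F) v (S ∪ A.biUnion R) ⊔ Submodule.span F {e} : Submodule F V) + A.card
      ≤ finrank F (spanOn (F := F) v S) + 1 + ∑ a ∈ A, (R a \ S).card := by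
  induction A using Finset.induction_on with
  | empty =>
    rw [Finset.biUnion_empty, Finset.union_empty, Submodule.finrank_sup_span_singleton he]
    simp
  | insert a A ha ih =>
    set U : Submodule F V := spanOn (F := F) v (S ∪ A.biUnion R) ⊔ Submodule.span F {e} with hU
    have hsup : (spanOn (F := F) v (S ∪ (insert a A).biUnion R) ⊔ Submodule.span F {e} :
        Submodule F V) = U ⊔ spanOn v (S ∪ R a) := by
      rw [Finset.biUnion_insert, hU]
      simp only [spanOn_union]
      apply le_antisymm <;> simp only [sup_le_iff] <;> refine ⟨?_, ?_⟩ <;>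
        simp [le_sup_of_le_left, le_sup_of_le_right]
    have hinf : spanOn (F := F) v S ⊔ Submodule.span F {e} ≤ U ⊓ spanOn v (S ∪ R a) := by
      have hS1 : spanOn (F := F) v S ≤ U := by
        rw [hU, spanOn_union]; exact le_sup_left.trans le_sup_left
      refine sup_le (le_inf hS1 ?_) (le_inf le_sup_right ?_)
      · rw [spanOn_union]; exact le_sup_left
      · rw [Submodule.span_singleton_le_iff_mem, spanOn_union]
        exact Submodule.mem_sup_right (hR a)
    -- The modular law: the intersection has rank at least `rank S + 1`, thanks to `e`.
    have h1 := Submodule.finrank_sup_add_finrank_inf_eq U (spanOn (F := F) v (S ∪ R a))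
    have h2 := Submodule.finrank_mono hinf
    rw [Submodule.finrank_sup_span_singleton he] at h2
    have h3 := finrank_spanOn_union_le (F := F) v S (R a)
    rw [hsup, Finset.card_insert_of_notMem ha, Finset.sum_insert ha]
    omega

end Span

section Code

variable {F : Type*} [Field F] {k n : ℕ} (C : (Fin k → F) →ₗ[F] (Fin n → F))

/-- A set of positions of rank less than `k` is blind to some nonzero message. -/
lemma exists_ne_zero_of_finrank_lt {S : Finset (Fin n)}
    (h : finrank F (spanOn (F := F) (coordFun C) S) < k) :
    ∃ x : Fin k → F, x ≠ 0 ∧ ∀ φ ∈ spanOn (F := F) (coordFun C) S, φ x = 0 := by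
  have h1 := Subspace.finrank_add_finrank_dualCoannihilator_eq (spanOn (F := F) (coordFun C) S)
  rw [finrank_fin_fun] at h1
  have h2 : (spanOn (F := F) (coordFun C) S).dualCoannihilator ≠ ⊥ := by
    intro hb
    rw [hb, finrank_bot] at h1
    omega
  obtain ⟨x, hx, hx0⟩ := Submodule.exists_mem_ne_zero_of_ne_bot h2
  exact ⟨x, hx0, fun φ hφ => (Submodule.mem_dualCoannihilator x).1 hx φ hφ⟩

lemma coordFun_mem {S : Finset (Fin n)} {j : Fin n} (hj : j ∈ S) :
    coordFun C j ∈ spanOn (F := F) (coordFun C) S :=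
  Submodule.subset_span ⟨j, hj, rfl⟩

/-- By linearity, recoverability from `S` is membership in the span of the coordinates in `S`. -/
lemma IsRecoverySet.proj_mem {i : Fin k} {S : Finset (Fin n)} (h : IsRecoverySet (⇑C) i S) :
    (LinearMap.proj i : Dual F (Fin k → F)) ∈ spanOn (F := F) (coordFun C) S := by
  have h1 : (⨅ j : S, LinearMap.ker (coordFun C j)) ≤
      LinearMap.ker (LinearMap.proj i : Dual F (Fin k → F)) := by
    intro x hx
    rw [Submodule.mem_iInf] at hx
    have h2 := h x 0 (fun j hj => by simpa [coordFun] using hx ⟨j, hj⟩)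
    simpa using h2
  have h3 := mem_span_of_iInf_ker_le_ker h1
  rw [Set.range_comp' (coordFun C) (fun j : S => (j : Fin n))] at h3
  simpa [spanOn] using h3

/-- `s` rounds of adjoining `t` disjoint recovery sets of an undetermined symbol. -/
lemma exists_excess {r t : ℕ} (hr : 1 ≤ r) (ht : 1 ≤ t) (hbatch : IsBatchCode (⇑C) r t) (s : ℕ)
    (hs : (r * t - t + 1) * s < k) :
    ∃ S : Finset (Fin n), finrank F (spanOn (F := F) (coordFun C) S) + (t - 1) * s ≤ S.card ∧
      finrank F (spanOn (F := F) (coordFun C) S) ≤ (r * t - t + 1) * s := by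
  classical
  induction s with
  | zero =>
    have h0 := finrank_spanOn_le (F := F) (coordFun C) ∅
    rw [Finset.card_empty] at h0
    exact ⟨∅, by simpa using h0, by simpa using h0⟩
  | succ s ih =>
    simp only [Nat.mul_add_one] at hs ⊢
    obtain ⟨S, hS1, hS2⟩ := ih (by omega)
    obtain ⟨x, hx0, hx⟩ := exists_ne_zero_of_finrank_lt C (S := S) (by omega)
    obtain ⟨i, hi⟩ := Function.ne_iff.1 hx0
    obtain ⟨R, hdis, hcard, hrec⟩ := hbatch (fun _ => i)
    have hstep := finrank_step (F := F) (coordFun C) S R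
      (e := (LinearMap.proj i : Dual F (Fin k → F))) (fun h => hi (hx _ h))
      (fun a => (hrec a).proj_mem C) Finset.univ
    have hmono := Submodule.finrank_mono (le_sup_left :
      spanOn (F := F) (coordFun C) (S ∪ Finset.univ.biUnion R) ≤
        _ ⊔ Submodule.span F {(LinearMap.proj i : Dual F (Fin k → F))})
    have hsum : (S ∪ Finset.univ.biUnion R).card = S.card + ∑ a, (R a \ S).card := by
      rw [← Finset.card_biUnion fun a _ b _ hab =>
        (hdis a b hab).mono Finset.sdiff_subset Finset.sdiff_subset]
      rw [← Finset.card_union_of_disjoint]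
      · congr 1
        ext j
        simp only [Finset.mem_union, Finset.mem_biUnion, Finset.mem_univ, true_and,
          Finset.mem_sdiff]
        grind
      · rw [Finset.disjoint_biUnion_right]
        exact fun a _ => Finset.disjoint_sdiff
    have hle : ∑ a, (R a \ S).card ≤ r * t := by
      calc ∑ a, (R a \ S).card ≤ ∑ _a : Fin t, r :=
            Finset.sum_le_sum fun a _ => (Finset.card_le_card Finset.sdiff_subset).trans (hcard a)
        _ = r * t := by simp [mul_comm]
    have hrt : t ≤ r * t := Nat.le_mul_of_pos_left t hr
    rw [Finset.card_univ, Fintype.card_fin] at hstep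
    refine ⟨S ∪ Finset.univ.biUnion R, ?_, ?_⟩
    · rw [hsum]
      omega
    · omega

/-- Adjoining independent positions reaches any rank below `k` without losing excess. -/
lemma exists_extend (hinj : Function.Injective C) {S : Finset (Fin n)} {x q : ℕ}
    (hS : finrank F (spanOn (F := F) (coordFun C) S) + x ≤ S.card)
    (hq : finrank F (spanOn (F := F) (coordFun C) S) ≤ q) (hqk : q < k) :
    ∃ T : Finset (Fin n), finrank F (spanOn (F := F) (coordFun C) T) = q ∧ q + x ≤ T.card := by
  classical
  induction q, hq using Nat.le_induction with
  | base => exact ⟨S, rfl, hS⟩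
  | succ q hq ih =>
    obtain ⟨T, hT, hc⟩ := ih (by omega)
    obtain ⟨y, hy0, hy⟩ := exists_ne_zero_of_finrank_lt C (S := T) (by omega)
    obtain ⟨j, hj⟩ : ∃ j, C y j ≠ 0 := by
      by_contra! h
      exact hy0 (hinj ((funext h : C y = 0).trans (map_zero C).symm))
    have hj' : coordFun C j ∉ spanOn (F := F) (coordFun C) T := fun h => hj (hy _ h)
    have hjT : j ∉ T := fun h => hj' (coordFun_mem C h)
    refine ⟨T ∪ {j}, ?_, ?_⟩
    · have h1 : spanOn (F := F) (coordFun C) {j} = Submodule.span F {coordFun C j} := by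
        simp [spanOn]
      rw [spanOn_union, h1, Submodule.finrank_sup_span_singleton hj', hT]
    · rw [Finset.card_union_of_disjoint (by simpa using hjT), Finset.card_singleton]
      omega

end Code

/-- Main bound: a linear `(k,n,r,t)` batch code with minimum distance `d` satisfies
`d ≤ n − k − (t−1)(⌈k/(rt−t+1)⌉ − 1) + 1`, stated in the rearranged form
`d + k + (t−1)(⌈k/(rt−t+1)⌉ − 1) ≤ n + 1`. -/
theorem stmt_5 {F : Type*} [Field F] [Fintype F] [DecidableEq F] {k n r t d : ℕ}
    (hr : 1 ≤ r) (ht : 1 ≤ t) (hk : 1 ≤ k)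
    (C : (Fin k → F) →ₗ[F] (Fin n → F)) (hinj : Function.Injective C)
    (hbatch : IsBatchCode (⇑C) r t)
    (hd_le : ∀ x : Fin k → F, x ≠ 0 → d ≤ hammingNorm (C x))
    (hd_eq : ∃ x : Fin k → F, x ≠ 0 ∧ hammingNorm (C x) = d) :
    d + k + (t - 1) * (natCeilDiv k (r * t - t + 1) - 1) ≤ n + 1 := by
  classical
  set m := r * t - t + 1 with hm
  have hlt : m * (natCeilDiv k m - 1) < k := by
    have h1 : m * ((k + m - 1) / m) ≤ k + m - 1 := Nat.mul_div_le _ _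
    rw [natCeilDiv, Nat.mul_sub, mul_one]
    omega
  obtain ⟨S, hS1, hS2⟩ := exists_excess C hr ht hbatch _ hlt
  rw [← hm] at hS2
  obtain ⟨T, hT, hc⟩ := exists_extend C hinj (q := k - 1) hS1 (by omega) (by omega)
  obtain ⟨x, hx0, hx⟩ := exists_ne_zero_of_finrank_lt C (S := T) (by omega)
  have hw : hammingNorm (C x) + T.card ≤ n := by
    have hdisj : Disjoint (Finset.univ.filter fun j => C x j ≠ 0) T := by
      rw [Finset.disjoint_left]
      exact fun j hj hjT => (Finset.mem_filter.1 hj).2 (hx _ (coordFun_mem C hjT))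
    have h := Finset.card_le_univ ((Finset.univ.filter fun j => C x j ≠ 0) ∪ T)
    rw [Finset.card_union_of_disjoint hdisj, Fintype.card_fin] at h
    exact h
  have := hd_le x hx0
  omega
end

section
/- Let C be a linear systematic (k,n,r,t) batch code over F with minimum distance d. Then n ≥ max over integers β with 2 ≤ β ≤ t of (β−1)(⌈k/(rβ−β−r+2)⌉ − 1) + k + d − 1. -/
/-- The information words whose codewords vanish at every coordinate of `I`; its codimension is the
rank of the coordinate functionals indexed by `I`. -/
def vanishing {F : Type*} [Field F] {k n : ℕ} (C : (Fin k → F) →ₗ[F] (Fin n → F))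
    (I : Finset (Fin n)) : Submodule F (Fin k → F) where
  carrier := {x | ∀ j ∈ I, C x j = 0}
  add_mem' := by
    intro a b ha hb j hj
    simp [ha j hj, hb j hj]
  zero_mem' := by intro j _; simp
  smul_mem' := by
    intro c a ha j hj
    simp [ha j hj]

section

variable {F : Type*} [Field F] {k n : ℕ} (C : (Fin k → F) →ₗ[F] (Fin n → F))

lemma mem_vanishing (I : Finset (Fin n)) (x : Fin k → F) :
    x ∈ vanishing C I ↔ ∀ j ∈ I, C x j = 0 := Iff.rfl

lemma finrank_le_finrank_inf_ker (W : Submodule F (Fin k → F)) (f : (Fin k → F) →ₗ[F] F) :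
    Module.finrank F W ≤ Module.finrank F ↥(W ⊓ LinearMap.ker f) + 1 := by
  have h1 := Submodule.finrank_sup_add_finrank_inf_eq W (LinearMap.ker f)
  have h2 := LinearMap.finrank_range_add_finrank_ker f
  have h3 := Submodule.finrank_le (W ⊔ LinearMap.ker f)
  have h4 : Module.finrank F (LinearMap.range f) ≤ 1 := by
    simpa using Submodule.finrank_le (LinearMap.range f)
  omega

lemma finrank_vanishing_insert (I : Finset (Fin n)) (j : Fin n) :
    Module.finrank F (vanishing C I) ≤ Module.finrank F (vanishing C (insert j I)) + 1 := by
  have h : vanishing C (insert j I)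
      = vanishing C I ⊓ LinearMap.ker ((LinearMap.proj j).comp C) := by
    ext x
    simp [mem_vanishing, and_comm]
  rw [h]
  exact finrank_le_finrank_inf_ker _ _

lemma finrank_vanishing_union (I K : Finset (Fin n)) :
    Module.finrank F (vanishing C I) ≤ Module.finrank F (vanishing C (I ∪ K)) + (K \ I).card := by
  classical
  rw [← Finset.union_sdiff_self_eq_union]
  generalize K \ I = L
  induction L using Finset.induction_on with
  | empty => rw [Finset.union_empty, Finset.card_empty, Nat.add_zero]
  | insert a L ha ih =>
    have := finrank_vanishing_insert C (I ∪ L) a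
    rw [Finset.union_insert, Finset.card_insert_of_notMem ha]
    omega

/-- By linearity, a recovery set for `i` expresses `x i` as a linear combination of its
coordinates. -/
lemma IsRecoverySet.exists_coeff {i : Fin k} {S : Finset (Fin n)} (h : IsRecoverySet (⇑C) i S) :
    ∃ c : Fin n → F, ∀ x : Fin k → F, x i = ∑ j ∈ S, c j * C x j := by
  let L : S → ((Fin k → F) →ₗ[F] F) := fun j => (LinearMap.proj (j : Fin n)).comp C
  have hmem : (LinearMap.proj i : (Fin k → F) →ₗ[F] F) ∈ Submodule.span F (Set.range L) := by
    apply mem_span_of_iInf_ker_le_ker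
    intro x hx
    simp only [Submodule.mem_iInf, LinearMap.mem_ker] at hx
    have := h x 0 (fun j hj => by simpa [L] using hx ⟨j, hj⟩)
    simpa using this
  rw [Submodule.mem_span_range_iff_exists_fun] at hmem
  obtain ⟨c, hc⟩ := hmem
  refine ⟨fun j => if hj : j ∈ S then c ⟨j, hj⟩ else 0, fun x => ?_⟩
  have := congrArg (fun f => f x) hc
  simp only [LinearMap.sum_apply, LinearMap.smul_apply, LinearMap.proj_apply] at this
  rw [← this, ← Finset.sum_coe_sort S]
  simp [L]

/-- If `x i` does not vanish identically on `vanishing C I`, then every recovery set for `i` has a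
coordinate outside `I` that is redundant once `x i` and the other coordinates of the set are
known. -/
lemma IsRecoverySet.exists_redundant {i : Fin k} {S I : Finset (Fin n)}
    (h : IsRecoverySet (⇑C) i S) {x : Fin k → F} (hx : x ∈ vanishing C I) (hxi : x i ≠ 0) :
    ∃ j ∈ S, j ∉ I ∧ ∀ y : Fin k → F, y i = 0 → (∀ l ∈ S, l ≠ j → C y l = 0) → C y j = 0 := by
  obtain ⟨c, hc⟩ := h.exists_coeff C
  rw [hc x] at hxi
  obtain ⟨j, hj, hne⟩ := Finset.exists_ne_zero_of_sum_ne_zero hxi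
  refine ⟨j, hj, fun hjI => hne (by rw [hx j hjI, mul_zero]), fun y hy hl => ?_⟩
  have h1 := hc y
  rw [hy, Finset.sum_eq_single_of_mem j hj (fun l hlS hlj => by rw [hl l hlS hlj, mul_zero])] at h1
  exact (mul_eq_zero.mp h1.symm).resolve_left (left_ne_zero_of_mul hne)

lemma exists_apply_ne_zero {I : Finset (Fin n)} (h : 0 < Module.finrank F (vanishing C I)) :
    ∃ x ∈ vanishing C I, ∃ i, x i ≠ 0 := by
  have hne : vanishing C I ≠ ⊥ := by
    intro hb
    rw [hb, finrank_bot] at h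
    exact lt_irrefl _ h
  obtain ⟨x, hx, hx0⟩ := Submodule.exists_mem_ne_zero_of_ne_bot hne
  exact ⟨x, hx, Function.ne_iff.mp hx0⟩

/-- One round of the greedy construction: `|I| + dim` gains `m` while `dim` loses at most
`m * (r - 1) + 1`. Here `m < t`, since one of the `t` recovery sets may contain the systematic
coordinate. -/
lemma exists_enlarge {r t m : ℕ} (hkn : k ≤ n)
    (hsys : ∀ x : Fin k → F, ∀ i : Fin k, C x (Fin.castLE hkn i) = x i)
    (hbatch : IsBatchCode (⇑C) r t) (hm : m + 1 ≤ t) (I : Finset (Fin n))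
    (hI : 0 < Module.finrank F (vanishing C I)) :
    ∃ J : Finset (Fin n),
      Module.finrank F (vanishing C I) ≤
        Module.finrank F (vanishing C J) + (m * (r - 1) + 1) ∧
      I.card + Module.finrank F (vanishing C I) + m ≤
        J.card + Module.finrank F (vanishing C J) := by
  classical
  obtain ⟨x, hx, i, hxi⟩ := exists_apply_ne_zero C hI
  obtain ⟨S, hdisj, hcard, hrec⟩ := hbatch (fun _ => i)
  set p : Fin n := Fin.castLE hkn i with hp
  obtain ⟨A, hA, hAm⟩ : ∃ A ⊆ Finset.univ.filter (fun a => p ∉ S a), A.card = m := by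
    apply Finset.exists_subset_card_eq
    have h1 : (Finset.univ.filter (fun a => p ∈ S a)).card ≤ 1 := by
      rw [Finset.card_le_one]
      intro a ha b hb
      by_contra hab
      simp only [Finset.mem_filter, Finset.mem_univ, true_and] at ha hb
      exact Finset.disjoint_left.mp (hdisj a b hab) ha hb
    have h2 := Finset.card_filter_add_card_filter_not (s := (Finset.univ : Finset (Fin t)))
      (fun a => p ∈ S a)
    rw [Finset.card_univ, Fintype.card_fin] at h2
    omega
  have hpA : ∀ a ∈ A, p ∉ S a := fun a ha => (Finset.mem_filter.mp (hA ha)).2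
  choose j hjS hjI hjred using fun a => (hrec a).exists_redundant C hx hxi
  set K : Finset (Fin n) := insert p (A.biUnion fun a => (S a).erase (j a)) with hK
  have hKcard : K.card ≤ m * (r - 1) + 1 := by
    refine (Finset.card_insert_le _ _).trans (Nat.add_le_add_right ?_ 1)
    rw [← hAm]
    refine Finset.card_biUnion_le_card_mul _ _ _ fun a _ => ?_
    rw [Finset.card_erase_of_mem (hjS a)]
    exact Nat.sub_le_sub_right (hcard a) 1
  -- The redundant coordinates are pairwise distinct and new.
  have hjinj : Set.InjOn j A := by
    intro a _ b _ hab
    by_contra hne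
    exact Finset.disjoint_left.mp (hdisj a b hne) (hjS a) (hab ▸ hjS b)
  have hdis : Disjoint (I ∪ K) (A.image j) := by
    rw [Finset.disjoint_right]
    intro q hq
    obtain ⟨a, ha, rfl⟩ := Finset.mem_image.mp hq
    simp only [hK, Finset.mem_union, Finset.mem_insert, Finset.mem_biUnion, Finset.mem_erase,
      not_or, not_exists, not_and]
    refine ⟨hjI a, fun h => hpA a ha (h ▸ hjS a), fun b _ hne hb => ?_⟩
    have hab : a ≠ b := fun h => hne (h ▸ rfl)
    exact Finset.disjoint_left.mp (hdisj a b hab) (hjS a) hb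
  have hV : vanishing C (I ∪ K ∪ A.image j) = vanishing C (I ∪ K) := by
    ext y
    simp only [mem_vanishing]
    refine ⟨fun h l hl => h l (Finset.mem_union_left _ hl), fun h l hl => ?_⟩
    rcases Finset.mem_union.mp hl with hl | hl
    · exact h l hl
    obtain ⟨a, ha, rfl⟩ := Finset.mem_image.mp hl
    refine hjred a y ?_ fun l hlS hlj => ?_
    · rw [← hsys y i]
      exact h _ (Finset.mem_union_right _ (Finset.mem_insert_self _ _))
    · exact h l (Finset.mem_union_right _ (Finset.mem_insert_of_mem
        (Finset.mem_biUnion.mpr ⟨a, ha, Finset.mem_erase.mpr ⟨hlj, hlS⟩⟩)))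
  have hdrop := finrank_vanishing_union C I K
  have hKI : (K \ I).card ≤ K.card := Finset.card_le_card Finset.sdiff_subset
  have hsum : (I ∪ K).card = I.card + (K \ I).card := by
    rw [← Finset.union_sdiff_self_eq_union, Finset.card_union_of_disjoint Finset.disjoint_sdiff]
  refine ⟨I ∪ K ∪ A.image j, ?_, ?_⟩
  · rw [hV]; omega
  · rw [hV, Finset.card_union_of_disjoint hdis, Finset.card_image_of_injOn hjinj]
    omega

lemma exists_enlarge_iterate {r t m : ℕ} (hkn : k ≤ n)
    (hsys : ∀ x : Fin k → F, ∀ i : Fin k, C x (Fin.castLE hkn i) = x i)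
    (hbatch : IsBatchCode (⇑C) r t) (hm : m + 1 ≤ t) (l : ℕ) (hl : l * (m * (r - 1) + 1) < k) :
    ∃ I : Finset (Fin n),
      k ≤ Module.finrank F (vanishing C I) + l * (m * (r - 1) + 1) ∧
      k + l * m ≤ I.card + Module.finrank F (vanishing C I) := by
  induction l with
  | zero =>
    have h : vanishing C ∅ = ⊤ := by
      ext x
      simp [mem_vanishing]
    have hk : Module.finrank F (vanishing C ∅) = k := by
      rw [h, finrank_top, Module.finrank_fin_fun]
    exact ⟨∅, by omega, by simp only [Finset.card_empty]; omega⟩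
  | succ l ih =>
    rw [Nat.succ_mul] at hl
    obtain ⟨I, h1, h2⟩ := ih (by omega)
    obtain ⟨J, h3, h4⟩ := exists_enlarge C hkn hsys hbatch hm I (by omega)
    refine ⟨J, ?_, ?_⟩
    · rw [Nat.succ_mul]; omega
    · rw [Nat.succ_mul]; omega

/-- A Singleton-type bound relative to `I`, stated with `dim = m + 1` to express positivity. -/
lemma dist_add_card_add_finrank_le [DecidableEq F] {d : ℕ} (hkn : k ≤ n)
    (hsys : ∀ x : Fin k → F, ∀ i : Fin k, C x (Fin.castLE hkn i) = x i)
    (hd_le : ∀ x : Fin k → F, x ≠ 0 → d ≤ hammingNorm (C x)) (m : ℕ) (I : Finset (Fin n))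
    (hI : Module.finrank F (vanishing C I) = m + 1) : d + I.card + m ≤ n := by
  obtain ⟨x, hx, i, hxi⟩ := exists_apply_ne_zero C (I := I) (by omega)
  induction m generalizing I x i with
  | zero =>
    have hd := hd_le x (fun h => hxi (by rw [h]; rfl))
    have hdis : Disjoint (Finset.univ.filter fun j => C x j ≠ 0) I := by
      rw [Finset.disjoint_left]
      intro j hj hjI
      exact (Finset.mem_filter.mp hj).2 (hx j hjI)
    have hle := Finset.card_le_univ ((Finset.univ.filter fun j => C x j ≠ 0) ∪ I)
    rw [Finset.card_union_of_disjoint hdis, Fintype.card_fin] at hle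
    unfold hammingNorm at hd
    omega
  | succ m ih =>
    set p : Fin n := Fin.castLE hkn i
    have hpI : p ∉ I := fun h => hxi (by rw [← hsys x i]; exact hx _ h)
    have hlt : vanishing C (insert p I) < vanishing C I := by
      refine lt_of_le_of_ne (fun y hy j hj => hy j (Finset.mem_insert_of_mem hj)) fun h => ?_
      rw [← h] at hx
      exact hxi (by rw [← hsys x i]; exact hx _ (Finset.mem_insert_self _ _))
    have h1 := Submodule.finrank_lt_finrank_of_lt hlt
    have h2 := finrank_vanishing_insert C I p
    have h3 : Module.finrank F (vanishing C (insert p I)) = m + 1 := by omega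
    obtain ⟨y, hy, i', hyi⟩ := exists_apply_ne_zero C (I := insert p I) (by omega)
    have h4 := ih (insert p I) h3 y hy i' hyi
    rw [Finset.card_insert_of_notMem hpI] at h4
    omega

end

/-- A linear *systematic* `(k,n,r,t)` batch code with minimum distance `d` satisfies,
for every integer `2 ≤ β ≤ t`, `n ≥ (β−1)(⌈k/(rβ−β−r+2)⌉ − 1) + k + d − 1`. -/
theorem stmt_7 {F : Type*} [Field F] [Fintype F] [DecidableEq F] {k n r t d : ℕ}
    (hr : 1 ≤ r) (ht : 1 ≤ t) (hk : 1 ≤ k) (hkn : k ≤ n)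
    (C : (Fin k → F) →ₗ[F] (Fin n → F)) (hinj : Function.Injective C)
    (hsys : ∀ x : Fin k → F, ∀ i : Fin k, C x (Fin.castLE hkn i) = x i)
    (hbatch : IsBatchCode (⇑C) r t)
    (hd_le : ∀ x : Fin k → F, x ≠ 0 → d ≤ hammingNorm (C x))
    (hd_eq : ∃ x : Fin k → F, x ≠ 0 ∧ hammingNorm (C x) = d) :
    ∀ β : ℕ, 2 ≤ β → β ≤ t →
      (β - 1) * (natCeilDiv k (r * β - β - r + 2) - 1) + k + d ≤ n + 1 := by
  intro β hβ hβt
  obtain ⟨m, rfl⟩ : ∃ m, β = m + 1 := ⟨β - 1, by omega⟩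
  obtain ⟨q, rfl⟩ : ∃ q, r = q + 1 := ⟨r - 1, by omega⟩
  -- For `r = 1` the truncated subtraction makes the denominator `2` rather than `1`;
  -- only this inequality is needed.
  have hs : m * (q + 1 - 1) + 1 ≤ (q + 1) * (m + 1) - (m + 1) - (q + 1) + 2 := by
    have : (q + 1) * (m + 1) = m * q + q + m + 1 := by ring
    rw [this, Nat.add_sub_cancel]
    omega
  generalize (q + 1) * (m + 1) - (m + 1) - (q + 1) + 2 = s at hs
  have hs0 : 0 < s := by omega
  have hceil : natCeilDiv k s - 1 = (k - 1) / s := by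
    have : k + s - 1 = (k - 1) + s := by omega
    rw [natCeilDiv, this, Nat.add_div_right _ hs0, Nat.succ_sub_one]
  rw [hceil]
  have hl : (k - 1) / s * (m * (q + 1 - 1) + 1) < k := by
    have h1 := Nat.div_mul_le_self (k - 1) s
    have h2 := Nat.mul_le_mul_left ((k - 1) / s) hs
    omega
  obtain ⟨I, h1, h2⟩ := exists_enlarge_iterate C hkn hsys hbatch hβt _ hl
  obtain ⟨e, he⟩ : ∃ e, Module.finrank F (vanishing C I) = e + 1 :=
    ⟨Module.finrank F (vanishing C I) - 1, by omega⟩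
  have h3 := dist_add_card_add_finrank_le C hkn hsys hd_le e I he
  rw [Nat.add_sub_cancel, Nat.mul_comm]
  omega
end
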